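/- arXiv:2008.13062 — 2 statements merged into one kernel-verified Lean document; each statement's English description precedes it below -/
import Mathlib

section
/- Let α be a type, A : Set α a sub-alphabet, and p_A the natural projection keeping exactly the letters in A. Let L be a language over α and let w be a word all of whose letters belong to A such that L · {w} · L ⊆ L. Then p_A⁻¹(L) · {w} · p_A⁻¹(L) ⊆ p_A⁻¹(L); that is, every synchronizing word of L is also a synchronizing word of the inverse projection p_A⁻¹(L). -/
/-- The inverse natural projection of a language: all words over `α` whose projection
(the subword of letters in `A`) lies in `L`. -/
def invProj {α : Type*} (A : Set α) [DecidablePred (· ∈ A)] (L : Language α) : Language α :=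
  {s : List α | s.filter (fun a => decide (a ∈ A)) ∈ L}

section InvProj

variable {α : Type*} {A : Set α} [DecidablePred (· ∈ A)]

theorem mem_invProj {L : Language α} {s : List α} :
    s ∈ invProj A L ↔ s.filter (fun a => decide (a ∈ A)) ∈ L :=
  Iff.rfl

variable (A)

theorem invProj_mono : Monotone (invProj A) :=
  fun _ _ hLM _ hs => hLM hs

theorem invProj_mul_invProj_le (L M : Language α) :
    invProj A L * invProj A M ≤ invProj A (L * M) := by
  intro s hs
  obtain ⟨u, hu, v, hv, rfl⟩ := Language.mem_mul.1 hs
  refine mem_invProj.2 ?_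
  rw [List.filter_append]
  exact Language.append_mem_mul (mem_invProj.1 hu) (mem_invProj.1 hv)

theorem singleton_le_invProj_singleton_filter (w : List α) :
    ({w} : Language α) ≤ invProj A {w.filter (fun a => decide (a ∈ A))} :=
  Set.singleton_subset_iff.2 (Set.mem_singleton _)

theorem sync_word_of_inv_proj_general (L : Language α) (w : List α)
    (h : L * ({w.filter (fun a => decide (a ∈ A))} : Language α) * L ≤ L) :
    invProj A L * ({w} : Language α) * invProj A L ≤ invProj A L := by
  set projW : Language α := {w.filter (fun a => decide (a ∈ A))}
  calc
    invProj A L * {w} * invProj A L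
      ≤ invProj A L * invProj A projW * invProj A L := by
        gcongr
        exact singleton_le_invProj_singleton_filter A w
    _ ≤ invProj A (L * projW) * invProj A L := by
        gcongr
        exact invProj_mul_invProj_le A L projW
    _ ≤ invProj A (L * projW * L) := invProj_mul_invProj_le A (L * projW) L
    _ ≤ invProj A L := invProj_mono A h

end InvProj

/-- Every synchronizing word of `L` composed only of letters of the sub-alphabet `A` is a
synchronizing word of the inverse projection of `L`. -/
theorem sync_word_of_inv_proj {α : Type*} (A : Set α) [DecidablePred (· ∈ A)]
    (L : Language α) (w : List α) (hwA : ∀ a ∈ w, a ∈ A)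
    (h : L * ({w} : Language α) * L ≤ L) :
    invProj A L * ({w} : Language α) * invProj A L ≤ invProj A L := by
  have hw : w.filter (fun a => decide (a ∈ A)) = w := by simpa using hwA
  exact sync_word_of_inv_proj_general A L w (hw.symm ▸ h)
end

section
/- Let α be a type, A₁, A₂ : Set α two sub-alphabets with natural projections p₁, p₂ (List.filter (· ∈ A₁), List.filter (· ∈ A₂)), and let R₁, R₂ be finite subsets of α with R = R₁ ∪ R₂ nonempty, R ∩ A₁ = R₁ and R ∩ A₂ = R₂. Let L₁, L₂ be languages over α such that L₁ · {u} · L₁ ⊆ L₁ for every u ∈ perm(R₁, R₁) and L₂ · {v} · L₂ ⊆ L₂ for every v ∈ perm(R₂, R₂). Then the language K = p₁⁻¹(L₁) ∩ p₂⁻¹(L₂) satisfies K · {w} · K ⊆ K for every w ∈ perm(R, R), and perm(R, R) is nonempty; hence K is a synchronizing language. (Language form of Corollary 4: parallel composition of components modeled with recovery events is always synchronizing.) -/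
/-- Intersection of two languages. -/
def langInter {α : Type*} (L₁ L₂ : Language α) : Language α := {s | s ∈ L₁ ∧ s ∈ L₂}

/-- `perm R B`: the words all of whose letters lie in `R` and in which every element of
`B` occurs exactly once. -/
def perm {α : Type*} [DecidableEq α] (R B : Finset α) : Language α :=
  {s : List α | (∀ a ∈ s, a ∈ R) ∧ ∀ b ∈ B, s.count b = 1}

/-- `w` is a synchronizing word of `L`: any two words of `L` may be joined through `w` without
leaving `L`. -/
def IsSynchronizingWord {α : Type*} (L : Language α) (w : List α) : Prop :=
  L * ({w} : Language α) * L ≤ L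

section Synchronizing

variable {α : Type*} {L L₁ L₂ : Language α} {w : List α}

theorem isSynchronizingWord_iff_append_mem :
    IsSynchronizingWord L w ↔ ∀ x ∈ L, ∀ y ∈ L, x ++ w ++ y ∈ L := by
  constructor
  · intro hw x hx y hy
    exact hw (Language.append_mem_mul (Language.append_mem_mul hx (Set.mem_singleton w)) hy)
  · rintro hw _ ⟨_, ⟨x, hx, _, rfl, rfl⟩, y, hy, rfl⟩
    exact hw x hx y hy

theorem IsSynchronizingWord.langInter (h₁ : IsSynchronizingWord L₁ w)
    (h₂ : IsSynchronizingWord L₂ w) : IsSynchronizingWord (langInter L₁ L₂) w := by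
  rw [isSynchronizingWord_iff_append_mem] at h₁ h₂ ⊢
  exact fun x hx y hy => ⟨h₁ x hx.1 y hy.1, h₂ x hx.2 y hy.2⟩

theorem IsSynchronizingWord.invProj {A : Set α} [DecidablePred (· ∈ A)]
    (h : IsSynchronizingWord L (w.filter (· ∈ A))) : IsSynchronizingWord (invProj A L) w := by
  rw [isSynchronizingWord_iff_append_mem] at h ⊢
  intro x hx y hy
  change (x ++ w ++ y).filter (· ∈ A) ∈ L
  rw [List.filter_append, List.filter_append]
  exact h _ hx _ hy

end Synchronizing

section Perm

variable {α : Type*} [DecidableEq α] {R B : Finset α}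

theorem filter_mem_perm {A : Set α} [DecidablePred (· ∈ A)] {S C : Finset α} {w : List α}
    (hS : (R : Set α) ∩ A ⊆ S) (hC : (C : Set α) ⊆ ↑B ∩ A) (hw : w ∈ perm R B) :
    w.filter (· ∈ A) ∈ perm S C := by
  obtain ⟨letters_mem, count_eq_one⟩ := hw
  constructor
  · intro a ha
    obtain ⟨haw, haA⟩ := List.mem_filter.1 ha
    exact hS ⟨letters_mem a haw, of_decide_eq_true haA⟩
  · intro c hc
    obtain ⟨hcB, hcA⟩ := hC hc
    rw [List.count_filter (by simpa using hcA)]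
    exact count_eq_one c hcB

theorem toList_mem_perm (h : B ⊆ R) : B.toList ∈ perm R B :=
  ⟨fun _ ha => h (Finset.mem_toList.1 ha),
    fun _ hb => List.count_eq_one_of_mem B.nodup_toList (Finset.mem_toList.2 hb)⟩

end Perm

/-- Language form of Corollary 4: the parallel composition of two components modeled with
recovery events is always synchronizing, every word of `perm(R, R)` (`R = R₁ ∪ R₂` the set
of recovery events) being a synchronizing word, and `perm(R, R)` being nonempty. -/
theorem recovery_parallel_sync {α : Type*} [DecidableEq α] (A₁ A₂ : Set α)
    [DecidablePred (· ∈ A₁)] [DecidablePred (· ∈ A₂)]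
    (R₁ R₂ : Finset α) (hne : (R₁ ∪ R₂).Nonempty)
    (h₁A : (↑(R₁ ∪ R₂) : Set α) ∩ A₁ = (↑R₁ : Set α))
    (h₂A : (↑(R₁ ∪ R₂) : Set α) ∩ A₂ = (↑R₂ : Set α))
    (L₁ L₂ : Language α)
    (hL₁ : ∀ u ∈ perm R₁ R₁, L₁ * ({u} : Language α) * L₁ ≤ L₁)
    (hL₂ : ∀ v ∈ perm R₂ R₂, L₂ * ({v} : Language α) * L₂ ≤ L₂) :
    (∀ w ∈ perm (R₁ ∪ R₂) (R₁ ∪ R₂),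
        langInter (invProj A₁ L₁) (invProj A₂ L₂) * ({w} : Language α) *
            langInter (invProj A₁ L₁) (invProj A₂ L₂) ≤
          langInter (invProj A₁ L₁) (invProj A₂ L₂)) ∧
      ∃ w, w ∈ perm (R₁ ∪ R₂) (R₁ ∪ R₂) := by
  refine ⟨fun w hw => ?_, _, toList_mem_perm subset_rfl⟩
  have sync₁ : IsSynchronizingWord (invProj A₁ L₁) w :=
    .invProj (hL₁ _ (filter_mem_perm h₁A.subset h₁A.superset hw))
  have sync₂ : IsSynchronizingWord (invProj A₂ L₂) w :=
    .invProj (hL₂ _ (filter_mem_perm h₂A.subset h₂A.superset hw))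
  exact sync₁.langInter sync₂
end
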